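/- Let γ ≥ 1, μ, k > 0, and define the sound speed c_s(ρ) = √(γρ^{γ−1}) and the characteristic speeds λ₁(ρ, m) = m/ρ − c_s(ρ), λ₂(ρ, m) = m/ρ + c_s(ρ). For any P⁻ > 0 there exists ε > 0 such that: if P⁺ > 0 with |P⁺ − P⁻| < ε, the constants P^±, J^±, s satisfy the Rankine–Hugoniot conditions J⁺ − J⁻ = s(P⁺ − P⁻) and ((J⁺)²/P⁺ + (P⁺)^γ) − ((J⁻)²/P⁻ + (P⁻)^γ) = s(J⁺ − J⁻), and either (i) the Lax 2-shock condition λ₂(P⁺, J⁺) < s < λ₂(P⁻, J⁻) holds together with J⁺/P⁺ > c_s(P⁺), or (ii) the Lax 1-shock condition λ₁(P⁺, J⁺) < s < λ₁(P⁻, J⁻) holds together with |J⁻/P⁻| < c_s(P⁻), then there exists a traveling wave profile: a C¹ solution (P, Q) : ℝ → (0,∞) × ℝ of the system P' = Q, Q' = (2/k²)f(P) − (2μs/k²)Q + Q²/P, with (P, Q)(y) → (P⁻, 0) as y → −∞ and (P, Q)(y) → (P⁺, 0) as y → +∞, and associated momentum profile J(y) = sP(y) − (sP⁻ − J⁻).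 -/

import Mathlib

open Filter Topology

/-- The nonlinearity of the traveling-wave (profile) equation of the viscous QHD system,
with end states `Pm = P⁻`, `Pp = P⁺` and pressure exponent `γ`. -/
noncomputable def profileF (γ Pm Pp P : ℝ) : ℝ :=
  P ^ γ + Pm * Pp / P * ((Pp ^ γ - Pm ^ γ) / (Pp - Pm))
    - (Pp ^ (γ + 1) - Pm ^ (γ + 1)) / (Pp - Pm)

/-- The sound speed `c_s(ρ) = √(γ ρ^{γ−1})`. -/
noncomputable def soundSpeed (γ ρ : ℝ) : ℝ := Real.sqrt (γ * ρ ^ (γ - 1))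

/-!
In the logarithmic density `v = log P` the profile system becomes a damped oscillator
`v'' = g v - c v'` with `c = 2 μ s / k²`. The Lax condition and the first Rankine–Hugoniot relation
order the end states (`P⁺ < P⁻` for a 2-shock, `P⁻ < P⁺` for a 1-shock), and since `P ↦ P f(P)` is
strictly convex, `log P⁺` and `log P⁻` are the only zeros of `g`. Up to the reflection `y ↦ -y`,
which exchanges the end states and changes the sign of `s`, we may take `s > 0` and `P⁺ < P⁻`; then
`(log P⁻, 0)` is a saddle. Its unstable branch starts with negative energy. The damping lets the
energy only decrease, and as `g → ∞` at `-∞` the negative energy confines the orbit to a well that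
contains no rest point but `(log P⁺, 0)`. By LaSalle's principle the orbit converges to it.

The branch leaving the saddle is found by blowing up: in `x = log (log P⁻ - v)` the saddle
moves to `x = -∞` and the velocity `p = x'` satisfies a Riccati equation for which a strip
`l ≤ p ≤ u` with `l > 0` is forward invariant, so compactness provides an orbit that has stayed in
the strip for all times.
-/

open Set
open scoped NNReal

section LipschitzFlow

variable {E : Type*} [NormedAddCommGroup E] [NormedSpace ℝ E]

theorem isIntegralCurveOn_union {α : ℝ → E} {v : ℝ → E → E} {s t : Set ℝ}
    (hs : IsClosed s) (ht : IsClosed t)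
    (hαs : IsIntegralCurveOn α v s) (hαt : IsIntegralCurveOn α v t) :
    IsIntegralCurveOn α v (s ∪ t) := by
  have within {u : Set ℝ} (hu : IsClosed u) (hαu : IsIntegralCurveOn α v u) (x : ℝ) :
      HasDerivWithinAt α (v x (α x)) u x := by
    by_cases hx : x ∈ u
    · exact hαu x hx
    · exact HasFDerivWithinAt.of_notMem_closure (hu.closure_eq.symm ▸ hx)
  exact fun x _ ↦ (within hs hαs x).union (within ht hαt x)

theorem isIntegralCurveOn_ite {α β : ℝ → E} {v : ℝ → E → E} {a b c : ℝ} (hab : a ≤ b) (hbc : b ≤ c)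
    (hα : IsIntegralCurveOn α v (Icc a b)) (hβ : IsIntegralCurveOn β v (Icc b c))
    (hαβ : α b = β b) :
    IsIntegralCurveOn (fun t ↦ if t ≤ b then α t else β t) v (Icc a c) := by
  rw [← Icc_union_Icc_eq_Icc hab hbc]
  have eqα : ∀ t ∈ Icc a b, (if t ≤ b then α t else β t) = α t := fun t ht ↦ if_pos ht.2
  have eqβ : ∀ t ∈ Icc b c, (if t ≤ b then α t else β t) = β t := by
    rintro t ht
    rcases ht.1.eq_or_lt with rfl | hbt
    · rw [if_pos le_rfl, hαβ]
    · rw [if_neg hbt.not_ge]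
  refine isIntegralCurveOn_union isClosed_Icc isClosed_Icc (fun t ht ↦ ?_) (fun t ht ↦ ?_)
  · rw [eqα t ht]
    exact (hα t ht).congr eqα (eqα t ht)
  · rw [eqβ t ht]
    exact (hβ t ht).congr eqβ (eqβ t ht)

variable {f : E → E} {K : ℝ≥0}

theorem eqOn_Iic_of_lipschitzWith (hf : LipschitzWith K f) {α β : ℝ → E} {b : ℝ}
    (hα : IsIntegralCurveOn α (fun _ ↦ f) (Iic b)) (hβ : IsIntegralCurveOn β (fun _ ↦ f) (Iic b))
    (hαβ : α b = β b) : EqOn α β (Iic b) := by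
  intro t ht
  have within {δ : ℝ → E} (hδ : IsIntegralCurveOn δ (fun _ ↦ f) (Iic b)) :
      ∀ u ∈ Ioc t b, HasDerivWithinAt δ (f (δ u)) (Iic u) u :=
    fun u hu ↦ (hδ u hu.2).mono (Iic_subset_Iic.2 hu.2)
  exact ODE_solution_unique_of_mem_Icc_left (v := fun _ ↦ f) (s := fun _ ↦ univ)
    (fun _ _ ↦ hf.lipschitzOnWith) (hα.continuousOn.mono fun _ hu ↦ hu.2) (within hα)
    (fun _ _ ↦ mem_univ _) (hβ.continuousOn.mono fun _ hu ↦ hu.2) (within hβ)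
    (fun _ _ ↦ mem_univ _) hαβ ⟨le_rfl, ht⟩

theorem isIntegralCurve_eq_of_lipschitzWith (hf : LipschitzWith K f) {α β : ℝ → E} {t₀ : ℝ}
    (hα : IsIntegralCurve α (fun _ ↦ f)) (hβ : IsIntegralCurve β (fun _ ↦ f))
    (hαβ : α t₀ = β t₀) : α = β :=
  ODE_solution_unique_univ (v := fun _ ↦ f) (s := fun _ ↦ univ) (fun _ ↦ hf.lipschitzOnWith)
    (fun t ↦ ⟨hα t, mem_univ _⟩) (fun t ↦ ⟨hβ t, mem_univ _⟩) hαβ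

theorem dist_le_exp_mul_dist (hf : LipschitzWith K f) {α β : ℝ → E}
    (hα : IsIntegralCurve α (fun _ ↦ f)) (hβ : IsIntegralCurve β (fun _ ↦ f)) (t : ℝ) :
    dist (α t) (β t) ≤ Real.exp (K * |t|) * dist (α 0) (β 0) := by
  have forward {g : E → E} (hg : LipschitzWith K g) {α β : ℝ → E}
      (hα : IsIntegralCurve α (fun _ ↦ g)) (hβ : IsIntegralCurve β (fun _ ↦ g)) {t : ℝ}
      (ht : 0 ≤ t) : dist (α t) (β t) ≤ Real.exp (K * t) * dist (α 0) (β 0) := by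
    have gronwall := dist_le_of_trajectories_ODE (v := fun _ ↦ g) (fun _ ↦ hg)
      hα.continuous.continuousOn (fun u _ ↦ (hα u).hasDerivWithinAt)
      hβ.continuous.continuousOn (fun u _ ↦ (hβ u).hasDerivWithinAt) le_rfl t ⟨ht, le_rfl⟩
    rwa [sub_zero, mul_comm] at gronwall
  rcases le_total 0 t with ht | ht
  · rw [abs_of_nonneg ht]
    exact forward hf hα hβ ht
  · have reversed := forward (g := (-1 : ℝ) • f) (by simpa only [neg_one_smul] using hf.neg)
      (hα.comp_mul (-1)) (hβ.comp_mul (-1)) (neg_nonneg.2 ht)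
    simpa [abs_of_nonpos ht] using reversed

theorem exists_isIntegralCurveOn_Icc_two_mul {T : ℝ} (hT : 0 ≤ T)
    (h : ∀ x, ∃ α : ℝ → E, α 0 = x ∧ IsIntegralCurveOn α (fun _ ↦ f) (Icc (-T) T)) (x : E) :
    ∃ α : ℝ → E, α 0 = x ∧ IsIntegralCurveOn α (fun _ ↦ f) (Icc (-(2 * T)) (2 * T)) := by
  obtain ⟨α, hα₀, hα⟩ := h x
  obtain ⟨β, hβ₀, hβ⟩ := h (α T)
  obtain ⟨δ, hδ₀, hδ⟩ := h (α (-T))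
  have hβ' : IsIntegralCurveOn (fun t ↦ β (t - T)) (fun _ ↦ f) (Icc T (2 * T)) :=
    (hβ.comp_sub T).mono fun t ht ↦ by
      simp only [mem_vadd_set_iff_neg_vadd_mem, vadd_eq_add, mem_Icc] at ht ⊢
      constructor <;> linarith
  have hδ' : IsIntegralCurveOn (fun t ↦ δ (t + T)) (fun _ ↦ f) (Icc (-(2 * T)) (-T)) :=
    (hδ.comp_add T).mono fun t ht ↦ by
      simp only [mem_vadd_set_iff_neg_vadd_mem, vadd_eq_add, mem_Icc] at ht ⊢
      constructor <;> linarith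
  have hαβ := isIntegralCurveOn_ite (by linarith) (by linarith) hα hβ' (by simp [hβ₀])
  refine ⟨_, ?_, isIntegralCurveOn_ite (by linarith) (by linarith) hδ' hαβ ?_⟩
  · rcases hT.eq_or_lt with rfl | hT
    · simp [hδ₀, hα₀]
    · simp [hT, hT.le, hα₀]
  · simp [hδ₀, hT]

variable [CompleteSpace E]

theorem exists_isIntegralCurveOn_Icc_inv (hf : LipschitzWith K f) (x : E) :
    ∃ α : ℝ → E, α 0 = x ∧
      IsIntegralCurveOn α (fun _ ↦ f) (Icc (-(K + 1 : ℝ)⁻¹) (K + 1 : ℝ)⁻¹) := by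
  set h : ℝ := (K + 1 : ℝ)⁻¹ with h_def
  have hh : 0 ≤ h := by positivity
  -- On the ball of radius `‖f x‖` the speed is at most `(K + 1) * ‖f x‖`.
  have speed_le : ∀ y ∈ Metric.closedBall x ‖f x‖₊, ‖f y‖ ≤ ((K + 1) * ‖f x‖₊ : ℝ≥0) := by
    intro y hy
    have hdist : ‖f y - f x‖ ≤ K * ‖f x‖ :=
      (hf.norm_sub_le y x).trans (by gcongr; simpa [dist_eq_norm] using hy)
    have htri := norm_le_norm_add_norm_sub' (f y) (f x)
    push_cast
    linarith
  have time_le : ((K + 1) * ‖f x‖₊ : ℝ≥0) * max (h - 0) (0 - -h) ≤ ‖f x‖₊ - (0 : ℝ≥0) := by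
    rw [sub_zero, zero_sub, neg_neg, max_self, h_def]
    push_cast
    field_simp
    simp
  exact (IsPicardLindelof.of_time_independent (t₀ := ⟨0, by simpa using hh, hh⟩) speed_le
    hf.lipschitzOnWith time_le).exists_eq_forall_mem_Icc_hasDerivWithinAt₀

theorem exists_isIntegralCurveOn_Icc (hf : LipschitzWith K f) (n : ℕ) (x : E) :
    ∃ α : ℝ → E, α 0 = x ∧ IsIntegralCurveOn α (fun _ ↦ f) (Icc (-n) n) := by
  have pow_two_mul : ∀ m : ℕ, ∀ x, ∃ α : ℝ → E, α 0 = x ∧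
      IsIntegralCurveOn α (fun _ ↦ f) (Icc (-(2 ^ m * (K + 1 : ℝ)⁻¹)) (2 ^ m * (K + 1 : ℝ)⁻¹)) := by
    intro m
    induction m with
    | zero => simpa using exists_isIntegralCurveOn_Icc_inv hf
    | succ m ih =>
      simpa only [pow_succ', mul_assoc] using
        exists_isIntegralCurveOn_Icc_two_mul (by positivity) ih
  obtain ⟨m, hm⟩ := pow_unbounded_of_one_lt ((n : ℝ) * (K + 1)) one_lt_two
  have hnm : (n : ℝ) ≤ 2 ^ m * (K + 1 : ℝ)⁻¹ := by
    rw [← div_eq_mul_inv, le_div_iff₀ (by positivity)]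
    exact hm.le
  obtain ⟨α, hα₀, hα⟩ := pow_two_mul m x
  exact ⟨α, hα₀, hα.mono (Icc_subset_Icc (neg_le_neg hnm) hnm)⟩

theorem exists_isIntegralCurve_of_lipschitzWith (hf : LipschitzWith K f) (x : E) :
    ∃ α : ℝ → E, α 0 = x ∧ IsIntegralCurve α (fun _ ↦ f) := by
  choose α hα₀ hα using fun n : ℕ ↦ exists_isIntegralCurveOn_Icc hf n x
  have hderiv (n : ℕ) (t : ℝ) (ht : t ∈ Ioo (-n : ℝ) n) : HasDerivAt (α n) (f (α n t)) t :=
    (hα n t (Ioo_subset_Icc_self ht)).hasDerivAt (Icc_mem_nhds ht.1 ht.2)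
  have agree (m n : ℕ) (hmn : m ≤ n) (t : ℝ) (ht : t ∈ Ioo (-m : ℝ) m) : α m t = α n t := by
    have hmn' : (m : ℝ) ≤ n := by exact_mod_cast hmn
    have hm : (0 : ℝ) < m := by linarith [ht.1, ht.2]
    exact ODE_solution_unique_of_mem_Ioo (v := fun _ ↦ f) (s := fun _ ↦ univ)
      (fun _ _ ↦ hf.lipschitzOnWith) (t₀ := 0) ⟨by linarith, hm⟩
      (fun u hu ↦ ⟨hderiv m u hu, mem_univ _⟩)
      (fun u hu ↦ ⟨hderiv n u ⟨by linarith [hu.1], by linarith [hu.2]⟩, mem_univ _⟩)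
      (by rw [hα₀, hα₀]) ht
  have mem_Ioo_ceil (t : ℝ) : t ∈ Ioo (-((⌈|t|⌉₊ + 1 : ℕ) : ℝ)) (⌈|t|⌉₊ + 1 : ℕ) := by
    rw [mem_Ioo, ← abs_lt]
    push_cast
    linarith [Nat.le_ceil |t|]
  refine ⟨fun t ↦ α (⌈|t|⌉₊ + 1) t, hα₀ _, fun t ↦ ?_⟩
  refine (hderiv _ t (mem_Ioo_ceil t)).congr_of_eventuallyEq ?_
  filter_upwards [Ioo_mem_nhds (mem_Ioo_ceil t).1 (mem_Ioo_ceil t).2] with u hu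
  rcases le_total (⌈|u|⌉₊ + 1) (⌈|t|⌉₊ + 1) with h | h
  · exact agree _ _ h u (mem_Ioo_ceil u)
  · exact (agree _ _ h u hu).symm

theorem exists_flow_of_lipschitzWith (hf : LipschitzWith K f) :
    ∃ φ : Flow ℝ E, ∀ x, IsIntegralCurve (φ · x) (fun _ ↦ f) := by
  choose α hα₀ hα using exists_isIntegralCurve_of_lipschitzWith hf
  have continuous_uncurry : Continuous fun p : E × ℝ ↦ α p.1 p.2 := by
    refine continuous_iff_continuousAt.2 fun ⟨x, t⟩ ↦ ?_
    have ht : t ∈ Ioo (-(|t| + 1)) (|t| + 1) := abs_lt.1 (lt_add_one _)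
    refine (continuousOn_prod_of_continuousOn_lipschitzOnWith (s := univ)
      (t := Ioo (-(|t| + 1)) (|t| + 1)) (fun p : E × ℝ ↦ α p.1 p.2)
      (Real.exp (K * (|t| + 1))).toNNReal (fun y _ ↦ (hα y).continuous.continuousOn)
      fun u hu ↦ LipschitzWith.lipschitzOnWith <| LipschitzWith.of_dist_le_mul fun y z ↦ ?_
      ).continuousAt (prod_mem_nhds univ_mem (Ioo_mem_nhds ht.1 ht.2))
    rw [Real.coe_toNNReal _ (Real.exp_pos _).le]
    have hu' : |u| ≤ |t| + 1 := (abs_lt.2 hu).le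
    calc dist (α y u) (α z u) ≤ Real.exp (K * |u|) * dist (α y 0) (α z 0) :=
          dist_le_exp_mul_dist hf (hα y) (hα z) u
      _ ≤ Real.exp (K * (|t| + 1)) * dist y z := by rw [hα₀, hα₀]; gcongr
  have map_add (s t : ℝ) (x : E) : α x (s + t) = α (α x t) s :=
    congr_fun (isIntegralCurve_eq_of_lipschitzWith (t₀ := 0) hf ((hα x).comp_add t) (hα (α x t))
      (by simp [hα₀])) s
  exact ⟨⟨fun t x ↦ α x t, continuous_uncurry.comp continuous_swap, map_add, hα₀⟩, hα⟩

end LipschitzFlow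

section Dynamics

variable {X : Type*} [TopologicalSpace X] [T2Space X]

theorem tendsto_orbit_of_antitoneOn_of_isCompact (φ : Flow ℝ X) {V : X → ℝ}
    (hV : Continuous V) {S : Set X} (hS : IsCompact S) {x a : X}
    (orbit_mem : ∀ t, 0 ≤ t → φ t x ∈ S) (antitone : AntitoneOn (fun t ↦ V (φ t x)) (Ici 0))
    (eq_of_level : ∀ y, (∀ t, φ t y ∈ S) → (∀ t, V (φ t y) = V y) → y = a) :
    Tendsto (φ · x) atTop (𝓝 a) := by
  have eventually_mem : ∀ᶠ t in atTop, φ t x ∈ S := (eventually_ge_atTop 0).mono orbit_mem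
  obtain ⟨l, hl⟩ : ∃ l, Tendsto (fun t ↦ V (φ t x)) atTop (𝓝 l) := by
    obtain ⟨C, hC⟩ := hS.bddBelow_image hV.continuousOn
    have antitone_max : Antitone fun t ↦ V (φ (max t 0) x) := fun s t hst ↦
      antitone (mem_Ici.2 (le_max_right s 0)) (mem_Ici.2 (le_max_right t 0))
        (max_le_max_right 0 hst)
    refine ⟨_, (tendsto_atTop_ciInf antitone_max ⟨C, ?_⟩).congr' ?_⟩
    · rintro _ ⟨t, rfl⟩
      exact hC (mem_image_of_mem V (orbit_mem _ (le_max_right t 0)))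
    · filter_upwards [eventually_ge_atTop 0] with t ht
      rw [max_eq_left ht]
  have level {y : X} (hy : MapClusterPt y atTop (φ · x)) : V y = l := by
    have hVy : MapClusterPt (V y) atTop (fun t ↦ V (φ t x)) :=
      hy.continuousAt_comp hV.continuousAt
    have : (𝓝 (V y) ⊓ 𝓝 l).NeBot := hVy.neBot.mono (inf_le_inf_left _ hl)
    exact eq_of_nhds_neBot this
  refine hS.tendsto_nhds_of_unique_mapClusterPt eventually_mem fun y _ hy ↦ ?_
  have orbit_mapClusterPt (t : ℝ) : MapClusterPt (φ t y) atTop (φ · x) := by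
    rw [← mem_omegaLimit_singleton_iff_mapClusterPt] at hy ⊢
    exact φ.isInvariant_omegaLimit _ _ (fun t ↦ tendsto_atTop_add_const_left _ t tendsto_id) t hy
  refine eq_of_level y (fun t ↦ ?_) (fun t ↦ (level (orbit_mapClusterPt t)).trans (level hy).symm)
  exact hS.isClosed.mem_of_mapClusterPt (orbit_mapClusterPt t) eventually_mem

theorem exists_orbit_subset_of_isForwardInvariant (φ : Flow ℝ X) {A C : Set X} (hA : IsClosed A)
    (hφA : IsForwardInvariant φ A) (hC : IsCompact C)
    (hits : ∀ n : ℕ, ∃ x ∈ A, φ n x ∈ C) : ∃ x ∈ C, ∀ t, φ t x ∈ A := by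
  -- Points of `C` whose orbit has been in `A` since time `-n`: a decreasing sequence of compacts.
  let S (n : ℕ) : Set X := C ∩ φ (-n) ⁻¹' A
  have S_succ_subset (n : ℕ) : S (n + 1) ⊆ S n := fun x hx ↦ ⟨hx.1, by
    have := hφA zero_le_one hx.2
    rwa [← φ.map_add, show (1 + -((n + 1 : ℕ) : ℝ)) = -n by push_cast; ring] at this⟩
  have S_nonempty (n : ℕ) : (S n).Nonempty := by
    obtain ⟨x, hxA, hxC⟩ := hits n
    refine ⟨φ n x, hxC, ?_⟩
    rwa [mem_preimage, ← φ.map_add, neg_add_cancel, φ.map_zero_apply]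
  have S_isClosed (n : ℕ) : IsClosed (S n) := hC.isClosed.inter (hA.preimage (φ.continuous_toFun _))
  obtain ⟨x, hx⟩ := IsCompact.nonempty_iInter_of_sequence_nonempty_isCompact_isClosed S
    S_succ_subset S_nonempty (hC.of_isClosed_subset (S_isClosed 0) inter_subset_left) S_isClosed
  rw [mem_iInter] at hx
  refine ⟨x, (hx 0).1, fun t ↦ ?_⟩
  obtain ⟨n, hn⟩ := exists_nat_ge (-t)
  have := hφA (show 0 ≤ t + n by linarith) (hx n).2
  rwa [← φ.map_add, add_neg_cancel_right] at this

theorem mem_Icc_of_deriv_inward {p p' : ℝ → ℝ} {l u t₀ : ℝ} (hp : ∀ t, HasDerivAt p (p' t) t)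
    (h₀ : p t₀ ∈ Icc l u) (lower : ∀ t, p t = l → 0 < p' t) (upper : ∀ t, p t = u → p' t < 0)
    {t : ℝ} (ht : t₀ ≤ t) : p t ∈ Icc l u := by
  have hp_cont : ContinuousOn p (Icc t₀ t) := HasDerivAt.continuousOn fun s _ ↦ hp s
  refine ⟨neg_le_neg_iff.1 ?_, ?_⟩
  · exact image_le_of_deriv_right_lt_deriv_boundary (B := fun _ ↦ -l) hp_cont.neg
      (fun s _ ↦ (hp s).neg.hasDerivWithinAt) (neg_le_neg h₀.1) (fun s ↦ hasDerivAt_const s (-l))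
      (fun s _ hs ↦ neg_lt_zero.2 (lower s (neg_injective hs))) (right_mem_Icc.2 ht)
  · exact image_le_of_deriv_right_lt_deriv_boundary hp_cont
      (fun s _ ↦ (hp s).hasDerivWithinAt) h₀.2 (fun s ↦ hasDerivAt_const s u)
      (fun s _ hs ↦ upper s hs) (right_mem_Icc.2 ht)

theorem mapsTo_Ioo_of_ne {Y : Type*} [TopologicalSpace Y] {S : Set Y} (hS : IsPreconnected S)
    {p : Y → ℝ} (hp : ContinuousOn p S) {y₀ : Y} (hy₀ : y₀ ∈ S) {l u : ℝ} (h₀ : p y₀ ∈ Ioo l u)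
    (hl : ∀ y ∈ S, p y ≠ l) (hu : ∀ y ∈ S, p y ≠ u) : MapsTo p S (Ioo l u) := by
  refine fun y hy ↦ ⟨lt_of_not_ge fun h ↦ ?_, lt_of_not_ge fun h ↦ ?_⟩
  · obtain ⟨z, hz, hzl⟩ := hS.intermediate_value hy hy₀ hp ⟨h, h₀.1.le⟩
    exact hl z hz hzl
  · obtain ⟨z, hz, hzu⟩ := hS.intermediate_value hy₀ hy hp ⟨h₀.2.le, h⟩
    exact hu z hz hzu

end Dynamics

theorem sub_mem_Icc_of_deriv_mem_Icc {p p' : ℝ → ℝ} {a b l u : ℝ} (hab : a ≤ b)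
    (hp : ∀ t, HasDerivAt p (p' t) t) (hp' : ∀ t, a ≤ t → p' t ∈ Icc l u) :
    p b - p a ∈ Icc (l * (b - a)) (u * (b - a)) := by
  have hcont : ContinuousOn p (Icc a b) := HasDerivAt.continuousOn fun t _ ↦ hp t
  have hdiff : DifferentiableOn ℝ p (interior (Icc a b)) :=
    fun t _ ↦ (hp t).differentiableAt.differentiableWithinAt
  have hderiv : ∀ t ∈ interior (Icc a b), deriv p t ∈ Icc l u := fun t ht ↦
    (hp t).deriv.symm ▸ hp' t (interior_subset ht).1
  exact ⟨(convex_Icc a b).mul_sub_le_image_sub_of_le_deriv hcont hdiff (fun t ht ↦ (hderiv t ht).1)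
      a (left_mem_Icc.2 hab) b (right_mem_Icc.2 hab) hab,
    (convex_Icc a b).image_sub_le_mul_sub_of_deriv_le hcont hdiff (fun t ht ↦ (hderiv t ht).2)
      a (left_mem_Icc.2 hab) b (right_mem_Icc.2 hab) hab⟩

section Riccati

theorem exists_orbit_velocity_mem_Icc {φ : Flow ℝ (ℝ × ℝ)} {G : ℝ × ℝ → ℝ}
    (hφ : ∀ z, IsIntegralCurve (φ · z) (fun _ z ↦ (z.2, G z))) {l u : ℝ} (hlu : l ≤ u)
    (lower : ∀ x, 0 < G (x, l)) (upper : ∀ x, G (x, u) < 0) (x₀ : ℝ) :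
    ∃ z : ℝ × ℝ, z.1 = x₀ ∧ ∀ t, (φ t z).2 ∈ Icc l u := by
  have hasDerivAt_fst (z : ℝ × ℝ) (t : ℝ) : HasDerivAt (fun t ↦ (φ t z).1) (φ t z).2 t :=
    (hφ z t).fst
  have hasDerivAt_snd (z : ℝ × ℝ) (t : ℝ) : HasDerivAt (fun t ↦ (φ t z).2) (G (φ t z)) t :=
    (hφ z t).snd
  have forward : IsForwardInvariant φ {z | z.2 ∈ Icc l u} := fun t ht z hz ↦
    mem_Icc_of_deriv_inward (hasDerivAt_snd z) (by simpa [φ.map_zero] using hz)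
      (fun s hs ↦ by simpa only [← hs] using lower (φ s z).1)
      (fun s hs ↦ by simpa only [← hs] using upper (φ s z).1) ht
  have hits (n : ℕ) : ∃ z ∈ {z : ℝ × ℝ | z.2 ∈ Icc l u},
      φ n z ∈ ({x₀} ×ˢ Icc l u : Set (ℝ × ℝ)) := by
    have displacement (x : ℝ) : (φ n (x, l)).1 - x ∈ Icc (l * n) (u * n) := by
      simpa [φ.map_zero] using sub_mem_Icc_of_deriv_mem_Icc (Nat.cast_nonneg n)
        (hasDerivAt_fst (x, l)) fun t ht ↦ forward ht (left_mem_Icc.2 hlu : (x, l).2 ∈ Icc l u)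
    have hcont : Continuous fun x ↦ (φ n (x, l)).1 :=
      ((φ.continuous_toFun n).comp (by fun_prop : Continuous fun x : ℝ ↦ (x, l))).fst
    obtain ⟨x, -, hx⟩ := intermediate_value_Icc
      (show x₀ - u * n ≤ x₀ - l * n by gcongr) hcont.continuousOn
      (⟨by linarith [(displacement (x₀ - u * n)).2], by linarith [(displacement (x₀ - l * n)).1]⟩ :
        x₀ ∈ Icc _ _)
    have hxl : (x, l) ∈ {z : ℝ × ℝ | z.2 ∈ Icc l u} := left_mem_Icc.2 hlu
    exact ⟨(x, l), hxl, hx, forward (Nat.cast_nonneg n) hxl⟩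
  obtain ⟨z, hz, hzA⟩ := exists_orbit_subset_of_isForwardInvariant φ
    (isClosed_Icc.preimage continuous_snd) forward (isCompact_singleton.prod isCompact_Icc) hits
  exact ⟨z, hz.1, hzA⟩

theorem exists_riccati_orbit {R : ℝ → ℝ} {K : ℝ≥0} (hR : LipschitzWith K R) {d₁ d₂ : ℝ}
    (hd₁ : 0 < d₁) (hRd : ∀ x, R x ∈ Icc d₁ d₂) (c x₀ : ℝ) :
    ∃ l > 0, ∃ u, ∃ x p : ℝ → ℝ, x 0 = x₀ ∧ (∀ t, p t ∈ Icc l u) ∧ (∀ t, HasDerivAt x (p t) t) ∧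
      ∀ t, HasDerivAt p (R (x t) - (c * p t + p t ^ 2)) t := by
  obtain ⟨l, hlR, hl⟩ : ∃ l, c * l + l ^ 2 < d₁ ∧ 0 < l := by
    have : Tendsto (fun p : ℝ ↦ c * p + p ^ 2) (𝓝[>] 0) (𝓝 0) :=
      ((by fun_prop : Continuous fun p : ℝ ↦ c * p + p ^ 2).tendsto' 0 0 (by simp)).mono_left
        nhdsWithin_le_nhds
    exact ((this.eventually_lt_const hd₁).and self_mem_nhdsWithin).exists
  obtain ⟨u, huR, hlu⟩ : ∃ u, d₂ < c * u + u ^ 2 ∧ l ≤ u := by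
    have : Tendsto (fun p : ℝ ↦ c * p + p ^ 2) atTop atTop :=
      (tendsto_id.atTop_mul_atTop₀ (tendsto_atTop_add_const_left _ c tendsto_id)).congr
        fun p ↦ by simp only [id]; ring
    exact ((this.eventually_gt_atTop d₂).and (eventually_ge_atTop l)).exists
  -- Only the restriction of the quadratic to `[l, u]` matters, so it may be replaced by a
  -- Lipschitz function.
  obtain ⟨L, hL⟩ := (by fun_prop : ContDiff ℝ 1 fun p : ℝ ↦ c * p + p ^ 2).contDiffOn
    |>.exists_lipschitzOnWith one_ne_zero (convex_Icc l u) isCompact_Icc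
  obtain ⟨q, hq, hq_eq⟩ := hL.extend_real
  obtain ⟨φ, hφ⟩ := exists_flow_of_lipschitzWith (LipschitzWith.prod_snd.prodMk
    ((hR.comp LipschitzWith.prod_fst).sub (hq.comp LipschitzWith.prod_snd)))
  obtain ⟨z, hz, hzlu⟩ := exists_orbit_velocity_mem_Icc hφ hlu
    (fun x ↦ show 0 < R x - q l by linarith [hq_eq (left_mem_Icc.2 hlu), (hRd x).1])
    (fun x ↦ show R x - q u < 0 by linarith [hq_eq (right_mem_Icc.2 hlu), (hRd x).2]) x₀
  refine ⟨l, hl, u, fun t ↦ (φ t z).1, fun t ↦ (φ t z).2, by simpa [φ.map_zero] using hz, hzlu,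
    fun t ↦ (hφ z t).fst, fun t ↦ ?_⟩
  have hderiv : HasDerivAt (fun t ↦ (φ t z).2) (R (φ t z).1 - q (φ t z).2) t := (hφ z t).snd
  rwa [← hq_eq (hzlu t)] at hderiv

end Riccati

section UnstableBranch

/-- The vector field of the damped oscillator `v'' = g v - c * v'` on the phase plane, in the
coordinates `z = (v, v')`. -/
def dampedField (g : ℝ → ℝ) (c : ℝ) (z : ℝ × ℝ) : ℝ × ℝ := (z.2, g z.1 - c * z.2)

variable {g : ℝ → ℝ} {K : ℝ≥0}

theorem abs_slope_le (hg : LipschitzWith K g) (x y : ℝ) : |slope g x y| ≤ K := by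
  rw [slope_def_field, abs_div]
  exact div_le_of_le_mul₀ (abs_nonneg _) K.2 (hg.norm_sub_le y x)

theorem lipschitzWith_slope_sub_exp (hg : LipschitzWith K g) (b : ℝ) :
    LipschitzWith (2 * K) fun x ↦ slope g b (b - Real.exp x) := by
  refine LipschitzWith.of_dist_le_mul fun x y ↦ ?_
  wlog hxy : x ≤ y generalizing x y
  · simpa only [dist_comm] using this y x (le_of_not_ge hxy)
  obtain ⟨u, hu⟩ : ∃ u, u = Real.exp x := ⟨_, rfl⟩
  obtain ⟨v, hv⟩ : ∃ v, v = Real.exp y := ⟨_, rfl⟩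
  have hv_pos : 0 < v := hv ▸ Real.exp_pos y
  have ratio_le : 1 - u / v ≤ y - x := by
    have := Real.add_one_le_exp (x - y)
    rw [Real.exp_sub, ← hu, ← hv] at this
    linarith
  have slope_convex : u / v * slope g b (b - u) + (1 - u / v) * slope g (b - u) (b - v) =
      slope g b (b - v) := by
    have hratio : 1 - u / v = (v - u) / v := by rw [sub_div, div_self hv_pos.ne']
    rw [← sub_div_sub_smul_slope_add_sub_div_sub_smul_slope g b (b - u) (b - v), smul_eq_mul,
      smul_eq_mul, sub_sub_cancel_left, sub_sub_cancel_left, sub_sub_sub_cancel_left,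
      neg_div_neg_eq, hratio, div_neg, ← neg_div, neg_sub]
  have slope_sub : slope g b (b - u) - slope g b (b - v) =
      (1 - u / v) * (slope g b (b - u) - slope g (b - u) (b - v)) := by
    linear_combination slope_convex
  have ratio_nonneg : 0 ≤ 1 - u / v :=
    sub_nonneg.2 ((div_le_one hv_pos).2 (by rwa [hu, hv, Real.exp_le_exp]))
  rw [Real.dist_eq, Real.dist_eq, ← hu, ← hv, slope_sub, abs_mul, abs_of_nonneg ratio_nonneg,
    abs_sub_comm x, abs_of_nonneg (sub_nonneg.2 hxy), mul_comm, NNReal.coe_mul, NNReal.coe_ofNat,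
    two_mul]
  gcongr
  exact (abs_sub _ _).trans (add_le_add (abs_slope_le hg _ _) (abs_slope_le hg _ _))

theorem exists_unstable_branch (hg : LipschitzWith K g) {q b d : ℝ} (hqb : q < b) (hgb : g b = 0)
    (hd : 0 < d) (hgd : ∀ x ∈ Ico q b, d ≤ slope g b x) (c : ℝ) :
    ∃ z : ℝ → ℝ × ℝ, IsIntegralCurveOn z (fun _ ↦ dampedField g c) (Iic 0) ∧
      (∀ t ≤ 0, z t ∈ Ico q b ×ˢ Iio 0) ∧ Tendsto z atBot (𝓝 (b, 0)) := by
  have exp_le {y : ℝ} (hy : y ≤ Real.log (b - q)) : Real.exp y ≤ b - q :=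
    (Real.le_log_iff_exp_le (sub_pos.2 hqb)).1 hy
  -- In the variables `z = (b - exp x, -exp x * p)` the system reads `x' = p`,
  -- `p' = slope g b (b - exp x) - c * p - p ^ 2`, and the point `(b, 0)` lies at `x = -∞`.
  obtain ⟨l, hl, u, x, p, hx₀, hp, hx', hp'⟩ := exists_riccati_orbit
    (R := fun y ↦ slope g b (b - Real.exp (min y (Real.log (b - q)))))
    ((lipschitzWith_slope_sub_exp hg b).comp (LipschitzWith.id.min_const (Real.log (b - q)))) hd
    (fun y ↦ ⟨hgd _ ⟨le_sub_comm.1 (exp_le (min_le_right _ _)), sub_lt_self b (Real.exp_pos _)⟩,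
      (le_abs_self _).trans (abs_slope_le hg _ _)⟩) c (Real.log (b - q))
  have hx_le (t : ℝ) (ht : t ≤ 0) : x t ≤ Real.log (b - q) + l * t := by
    have := (sub_mem_Icc_of_deriv_mem_Icc ht hx' fun s _ ↦ hp s).1
    linarith
  have hx_log (t : ℝ) (ht : t ≤ 0) : x t ≤ Real.log (b - q) :=
    (hx_le t ht).trans (by linarith [mul_nonpos_of_nonneg_of_nonpos hl.le ht])
  have hx_bot : Tendsto x atBot atBot :=
    tendsto_atBot_mono' _ ((eventually_le_atBot 0).mono hx_le)
      (tendsto_atBot_add_const_left _ _ (tendsto_id.const_mul_atBot hl))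
  have hexp : Tendsto (fun t ↦ Real.exp (x t)) atBot (𝓝 0) := Real.tendsto_exp_atBot.comp hx_bot
  refine ⟨fun t ↦ (b - Real.exp (x t), -(Real.exp (x t) * p t)), fun t ht ↦ ?_, fun t ht ↦ ?_, ?_⟩
  · have velocity : HasDerivAt (fun t ↦ (b - Real.exp (x t), -(Real.exp (x t) * p t))) _ t :=
      ((hx' t).exp.const_sub b).prodMk ((hx' t).exp.mul (hp' t)).neg
    refine HasDerivAt.hasDerivWithinAt (velocity.congr_deriv (Prod.ext rfl ?_))
    simp only [dampedField, min_eq_left (hx_log t ht), slope_def_field, hgb]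
    field_simp
    ring
  · exact ⟨⟨le_sub_comm.1 (exp_le (hx_log t ht)), sub_lt_self b (Real.exp_pos _)⟩,
      neg_neg_of_pos (mul_pos (Real.exp_pos _) (hl.trans_le (hp t).1))⟩
  · have bounded : IsBoundedUnder (· ≤ ·) atBot (norm ∘ p) := isBoundedUnder_of
      ⟨u, fun t ↦ (abs_of_pos (hl.trans_le (hp t).1)).trans_le (hp t).2⟩
    simpa using (tendsto_const_nhds.sub hexp).prodMk_nhds
      (hexp.zero_mul_isBoundedUnder_le bounded).neg

end UnstableBranch

section Heteroclinic

/-- Kinetic plus potential energy of the oscillator `dampedField g c`, the potential being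
normalized to vanish at `b`. -/
noncomputable def energy (g : ℝ → ℝ) (b : ℝ) (z : ℝ × ℝ) : ℝ := z.2 ^ 2 / 2 - ∫ x in b..z.1, g x

variable {g : ℝ → ℝ} {K : ℝ≥0} {a b c s : ℝ}

theorem hasDerivAt_energy (hg : Continuous g) {z : ℝ → ℝ × ℝ} {t : ℝ}
    (hz : HasDerivAt z (dampedField g c (z t)) t) :
    HasDerivAt (fun t ↦ energy g b (z t)) (-c * (z t).2 ^ 2) t := by
  have velocity : HasDerivAt (fun t ↦ (z t).1) (z t).2 t := hz.fst
  have acceleration : HasDerivAt (fun t ↦ (z t).2) (g (z t).1 - c * (z t).2) t := hz.snd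
  have potential : HasDerivAt (fun t ↦ ∫ x in b..(z t).1, g x) (g (z t).1 * (z t).2) t :=
    (hg.integral_hasStrictDerivAt b (z t).1).hasDerivAt.comp
      (h₂ := fun v ↦ ∫ x in b..v, g x) t velocity
  exact (((acceleration.pow 2).div_const 2).sub potential).congr_deriv (by push_cast; ring)

theorem continuous_energy (hg : Continuous g) : Continuous (energy g b) :=
  ((continuous_snd.pow 2).div_const 2).sub
    ((intervalIntegral.continuous_primitive (fun _ _ ↦ hg.intervalIntegrable _ _) b).comp
      continuous_fst)

theorem antitone_energy (hg : Continuous g) (hc : 0 ≤ c) {z : ℝ → ℝ × ℝ}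
    (hz : IsIntegralCurve z (fun _ ↦ dampedField g c)) : Antitone fun t ↦ energy g b (z t) :=
  antitone_of_hasDerivAt_nonpos (fun t ↦ hasDerivAt_energy hg (hz t))
    fun _ ↦ mul_nonpos_of_nonpos_of_nonneg (neg_nonpos.2 hc) (sq_nonneg _)

theorem energy_neg_of_tendsto_atBot (hg : Continuous g) (hc : 0 < c) {z : ℝ → ℝ × ℝ} {t₀ : ℝ}
    (hz : IsIntegralCurve z (fun _ ↦ dampedField g c)) (hz_ne : ∀ t ≤ t₀, (z t).2 ≠ 0)
    (hz_lim : Tendsto z atBot (𝓝 (b, 0))) : energy g b (z t₀) < 0 := by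
  have deriv_energy (t : ℝ) := hasDerivAt_energy (b := b) hg (hz t)
  have strictAntiOn : StrictAntiOn (fun t ↦ energy g b (z t)) (Iic t₀) := by
    refine strictAntiOn_of_deriv_neg (convex_Iic t₀)
      (HasDerivAt.continuousOn fun t _ ↦ deriv_energy t) fun t ht ↦ ?_
    rw [(deriv_energy t).deriv]
    have velocity_ne : (z t).2 ≠ 0 := hz_ne t (mem_Iic.1 (interior_subset ht))
    exact mul_neg_of_neg_of_pos (neg_lt_zero.2 hc) (by positivity)
  have energy_lim : Tendsto (fun t ↦ energy g b (z t)) atBot (𝓝 0) := by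
    have energy_eq : energy g b (b, 0) = 0 := by simp [energy]
    exact energy_eq ▸ ((continuous_energy hg).tendsto (b, 0)).comp hz_lim
  refine (strictAntiOn (sub_one_lt t₀).le self_mem_Iic (sub_one_lt t₀)).trans_le ?_
  exact (antitone_energy hg hc.le hz).ge_of_tendsto energy_lim _

theorem isCompact_energy_sublevel (hg : Continuous g) (e : ℝ) :
    IsCompact {z : ℝ × ℝ | z.1 ∈ Icc s b ∧ energy g b z ≤ e} := by
  obtain ⟨M, hM⟩ := isCompact_Icc.bddAbove_image
    (f := fun v ↦ ∫ x in b..v, g x) (K := Icc s b)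
    (intervalIntegral.continuous_primitive (fun _ _ ↦ hg.intervalIntegrable _ _) b).continuousOn
  refine (isCompact_Icc.prod (isCompact_Icc (a := -√(2 * (e + M))) (b := √(2 * (e + M))))
    ).of_isClosed_subset ((isClosed_Icc.preimage continuous_fst).inter
      (isClosed_le (continuous_energy hg) continuous_const)) fun z hz ↦ ⟨hz.1, ?_⟩
  have := hM (mem_image_of_mem _ hz.1)
  have := hz.2
  refine abs_le.1 (Real.abs_le_sqrt ?_)
  simp only [energy] at *
  linarith

theorem fst_ne_of_energy_neg (hs : 0 ≤ ∫ x in s..b, g x) {z : ℝ × ℝ} (hz : energy g b z < 0) :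
    z.1 ≠ s ∧ z.1 ≠ b := by
  constructor
  · intro h
    rw [energy, h, intervalIntegral.integral_symm] at hz
    linarith [sq_nonneg z.2]
  · intro h
    rw [energy, h, intervalIntegral.integral_same] at hz
    linarith [sq_nonneg z.2]

theorem eq_zero_of_energy_const (hg : Continuous g) (hc : 0 < c) {z : ℝ → ℝ × ℝ}
    (hz : IsIntegralCurve z (fun _ ↦ dampedField g c))
    (hE : ∀ t, energy g b (z t) = energy g b (z 0)) :
    (z 0).2 = 0 ∧ g (z 0).1 = 0 := by
  have velocity_eq_zero (t : ℝ) : (z t).2 = 0 := by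
    have hconst : HasDerivAt (fun t ↦ energy g b (z t)) 0 t := by
      simpa only [hE] using hasDerivAt_const t (energy g b (z 0))
    simpa [hc.ne'] using (hasDerivAt_energy hg (hz t)).unique hconst
  have acceleration : HasDerivAt (fun t ↦ (z t).2) (g (z 0).1 - c * (z 0).2) 0 := (hz 0).snd
  simp only [velocity_eq_zero] at acceleration
  refine ⟨velocity_eq_zero 0, ?_⟩
  simpa using acceleration.unique (hasDerivAt_const _ _)

theorem tendsto_of_energy_neg (hg : Continuous g) (hc : 0 < c)
    (hs : 0 ≤ ∫ x in s..b, g x) (ha : ∀ x ∈ Ioo s b, g x = 0 → x = a) {φ : Flow ℝ (ℝ × ℝ)}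
    (hφ : ∀ z, IsIntegralCurve (φ · z) (fun _ ↦ dampedField g c)) {z : ℝ × ℝ}
    (hz : z.1 ∈ Ioo s b) (hEz : energy g b z < 0) :
    (∀ t, 0 ≤ t → (φ t z).1 ∈ Ioo s b) ∧ Tendsto (φ · z) atTop (𝓝 (a, 0)) := by
  have antitone := antitone_energy (b := b) hg hc.le (hφ z)
  have energy_le (t : ℝ) (ht : 0 ≤ t) : energy g b (φ t z) ≤ energy g b z := by
    simpa only [φ.map_zero_apply] using antitone ht
  have confined : MapsTo (fun t ↦ (φ t z).1) (Ici 0) (Ioo s b) :=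
    mapsTo_Ioo_of_ne isPreconnected_Ici (hφ z).continuous.fst.continuousOn self_mem_Ici
      (by simpa only [φ.map_zero_apply] using hz)
      (fun t ht ↦ (fst_ne_of_energy_neg hs ((energy_le t ht).trans_lt hEz)).1)
      (fun t ht ↦ (fst_ne_of_energy_neg hs ((energy_le t ht).trans_lt hEz)).2)
  refine ⟨confined, tendsto_orbit_of_antitoneOn_of_isCompact φ (continuous_energy hg)
    (isCompact_energy_sublevel hg (energy g b z))
    (fun t ht ↦ ⟨Ioo_subset_Icc_self (confined ht), energy_le t ht⟩) (antitone.antitoneOn _)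
    fun y hyS hyE ↦ ?_⟩
  obtain ⟨hy₂, hgy⟩ := eq_zero_of_energy_const (b := b) hg hc (hφ y)
    (by simpa only [φ.map_zero_apply])
  rw [φ.map_zero_apply] at hy₂ hgy
  have hy := hyS 0
  rw [φ.map_zero_apply] at hy
  obtain ⟨hys, hyb⟩ := fst_ne_of_energy_neg hs (hy.2.trans_lt hEz)
  exact Prod.ext (ha y.1 ⟨hy.1.1.lt_of_ne' hys, hy.1.2.lt_of_ne hyb⟩ hgy) hy₂

theorem exists_forall_le_slope_left {g' d : ℝ}
    (hg' : HasDerivWithinAt g g' (Iic b) b) (hd : d < g') (hsb : s < b) :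
    ∃ q ∈ Ioo s b, ∀ x ∈ Ico q b, d ≤ slope g b x := by
  have slope_lim := (hasDerivWithinAt_iff_tendsto_slope' self_notMem_Iio).1 hg'.Iio_of_Iic
  obtain ⟨r, hrb, hr⟩ := mem_nhdsLT_iff_exists_Ioo_subset.1
    ((slope_lim.eventually_const_lt hd).and (Ioo_mem_nhdsLT hsb))
  obtain ⟨q, hrq, hqb⟩ := exists_between (mem_Iio.1 hrb)
  exact ⟨q, ⟨(hr ⟨hrq, hqb⟩).2.1, hqb⟩, fun x hx ↦ (hr ⟨hrq.trans_le hx.1, hx.2⟩).1.le⟩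

theorem exists_heteroclinic_of_lipschitzWith (hg : LipschitzWith K g) (hsb : s < b) (hc : 0 < c)
    (hgb : g b = 0) {g' : ℝ} (hg' : HasDerivWithinAt g g' (Iic b) b) (hg'_pos : 0 < g')
    (hs : 0 ≤ ∫ x in s..b, g x) (ha : ∀ x ∈ Ioo s b, g x = 0 → x = a) :
    ∃ z : ℝ → ℝ × ℝ, IsIntegralCurve z (fun _ ↦ dampedField g c) ∧ (∀ t, (z t).1 ∈ Ioo s b) ∧
      Tendsto z atBot (𝓝 (b, 0)) ∧ Tendsto z atTop (𝓝 (a, 0)) := by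
  obtain ⟨q, hq, hslope⟩ := exists_forall_le_slope_left hg' (half_lt_self hg'_pos) hsb
  obtain ⟨z, hz, hz_mem, hz_lim⟩ := exists_unstable_branch hg hq.2 hgb (half_pos hg'_pos) hslope c
  have field_lipschitz := LipschitzWith.prod_snd.prodMk
    ((hg.comp LipschitzWith.prod_fst).sub ((lipschitzWith_smul c).comp LipschitzWith.prod_snd))
  obtain ⟨φ, hφ⟩ := exists_flow_of_lipschitzWith field_lipschitz
  have eqOn : EqOn (φ · (z 0)) z (Iic 0) := eqOn_Iic_of_lipschitzWith field_lipschitz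
    ((hφ (z 0)).isIntegralCurveOn _) hz (φ.map_zero_apply _)
  have branch_mem (t : ℝ) (ht : t ≤ 0) : φ t (z 0) ∈ Ico q b ×ˢ Iio 0 :=
    mem_of_eq_of_mem (eqOn ht) (hz_mem t ht)
  have branch_lim : Tendsto (φ · (z 0)) atBot (𝓝 (b, 0)) :=
    hz_lim.congr' ((eventually_le_atBot 0).mono fun t ht ↦ (eqOn ht).symm)
  have energy_neg : energy g b (φ 0 (z 0)) < 0 := energy_neg_of_tendsto_atBot hg.continuous hc
    (hφ (z 0)) (fun t ht ↦ (branch_mem t ht).2.ne) branch_lim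
  have Ico_subset : Ico q b ⊆ Ioo s b := Ico_subset_Ioo_left hq.1
  obtain ⟨confined, tendsto⟩ := tendsto_of_energy_neg hg.continuous hc hs ha hφ
    (Ico_subset (hz_mem 0 le_rfl).1) (φ.map_zero_apply (z 0) ▸ energy_neg)
  refine ⟨(φ · (z 0)), hφ (z 0), fun t ↦ ?_, branch_lim, tendsto⟩
  exact (le_total t 0).elim (fun ht ↦ Ico_subset (branch_mem t ht).1) (confined t)

theorem exists_heteroclinic (hg : LipschitzOnWith K g (Icc s b)) (hsb : s < b) (hc : 0 < c)
    (hgb : g b = 0) {g' : ℝ} (hg' : HasDerivWithinAt g g' (Iic b) b) (hg'_pos : 0 < g')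
    (hs : 0 ≤ ∫ x in s..b, g x) (ha : ∀ x ∈ Ioo s b, g x = 0 → x = a) :
    ∃ z : ℝ → ℝ × ℝ, IsIntegralCurve z (fun _ ↦ dampedField g c) ∧
      Tendsto z atBot (𝓝 (b, 0)) ∧ Tendsto z atTop (𝓝 (a, 0)) := by
  obtain ⟨h, hh, hgh⟩ := hg.extend_real
  have hb : b ∈ Icc s b := right_mem_Icc.2 hsb.le
  have hh' : HasDerivWithinAt h g' (Iic b) b := hg'.congr_of_eventuallyEq
    (by filter_upwards [Icc_mem_nhdsLE hsb] with x hx using (hgh hx).symm) (hgh hb).symm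
  have hs' : 0 ≤ ∫ x in s..b, h x := by
    rwa [← intervalIntegral.integral_congr (by rwa [uIcc_of_le hsb.le])]
  obtain ⟨z, hz, hz_mem, hbot, htop⟩ := exists_heteroclinic_of_lipschitzWith hh hsb hc
    ((hgh hb).symm.trans hgb) hh' hg'_pos hs'
    fun x hx hx₀ ↦ ha x hx ((hgh (Ioo_subset_Icc_self hx)).trans hx₀)
  refine ⟨z, fun t ↦ ?_, hbot, htop⟩
  have hgz := hgh (Ioo_subset_Icc_self (hz_mem t))
  simpa only [dampedField, hgz] using hz t

end Heteroclinic

section ProfileForce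

theorem tendsto_intervalIntegral_atBot_atTop {g : ℝ → ℝ} (hg : Continuous g)
    (hg_lim : Tendsto g atBot atTop) (b : ℝ) :
    Tendsto (fun s ↦ ∫ x in s..b, g x) atBot atTop := by
  obtain ⟨s₀, hs₀⟩ := eventually_atBot.1 (hg_lim.eventually_ge_atTop 1)
  refine tendsto_atTop_mono' _ ?_ (tendsto_atTop_add_const_right _ (∫ x in s₀..b, g x)
    (tendsto_atTop_add_const_left _ s₀ tendsto_neg_atBot_atTop))
  filter_upwards [eventually_le_atBot s₀] with s hs
  have hint (u v : ℝ) : IntervalIntegrable g MeasureTheory.volume u v := hg.intervalIntegrable u v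
  have integral_ge : s₀ - s ≤ ∫ x in s..s₀, g x := by
    simpa using intervalIntegral.integral_mono_on hs intervalIntegrable_const (hint s s₀)
      fun x hx ↦ hs₀ x hx.2
  rw [← intervalIntegral.integral_add_adjacent_intervals (hint s s₀) (hint s₀ b)]
  linarith

theorem profileF_symm (γ Pm Pp P : ℝ) : profileF γ Pm Pp P = profileF γ Pp Pm P := by
  unfold profileF
  rw [← neg_sub (Pm ^ γ) (Pp ^ γ), ← neg_sub Pm Pp, ← neg_sub (Pm ^ (γ + 1)) (Pp ^ (γ + 1)),
    neg_div_neg_eq, neg_div_neg_eq, mul_comm Pm Pp]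

/-- The function `P ↦ P * profileF γ Pm Pp P`, extended to `P = 0` without singularity. It
is strictly convex for every `γ > 0`, which locates the zeros of `profileF`. -/
noncomputable def profileNumer (γ Pm Pp P : ℝ) : ℝ :=
  P ^ (γ + 1) + (Pm * Pp * ((Pp ^ γ - Pm ^ γ) / (Pp - Pm))
    - (Pp ^ (γ + 1) - Pm ^ (γ + 1)) / (Pp - Pm) * P)

variable {γ k Pm Pp P : ℝ}

theorem profileF_eq_profileNumer_div (hP : 0 < P) :
    profileF γ Pm Pp P = profileNumer γ Pm Pp P / P := by
  rw [profileF, profileNumer, Real.rpow_add_one hP.ne']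
  field_simp
  ring

theorem strictConvexOn_profileNumer (hγ : 0 < γ) :
    StrictConvexOn ℝ (Ici 0) (profileNumer γ Pm Pp) := by
  refine (strictConvexOn_rpow (by linarith)).add_convexOn ⟨convex_Ici 0, fun x _ y _ α β _ _ h ↦ ?_⟩
  simp only [smul_eq_mul]
  linear_combination -(Pm * Pp * ((Pp ^ γ - Pm ^ γ) / (Pp - Pm))) * h

theorem profileNumer_left (hPm : 0 < Pm) (hPp : 0 < Pp) (hne : Pp ≠ Pm) :
    profileNumer γ Pm Pp Pm = 0 := by
  have := sub_ne_zero.2 hne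
  rw [profileNumer, Real.rpow_add_one hPm.ne', Real.rpow_add_one hPp.ne']
  field_simp
  ring

theorem profileNumer_right (hPm : 0 < Pm) (hPp : 0 < Pp) (hne : Pp ≠ Pm) :
    profileNumer γ Pm Pp Pp = 0 := by
  have := sub_ne_zero.2 hne
  rw [profileNumer, Real.rpow_add_one hPm.ne', Real.rpow_add_one hPp.ne']
  field_simp
  ring

theorem eq_of_profileNumer_eq_zero (hγ : 0 < γ) (hPp : 0 < Pp) (hlt : Pp < Pm) (hP : 0 ≤ P)
    (hP_lt : P < Pm) (hzero : profileNumer γ Pm Pp P = 0) : P = Pp := by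
  have hPm := hPp.trans hlt
  have secant {x y : ℝ} (hx : 0 ≤ x) (hy : 0 ≤ y) (hxPm : x ≠ Pm) (hyPm : y ≠ Pm) (hxy : x < y) :=
    (strictConvexOn_profileNumer (Pm := Pm) (Pp := Pp) hγ).secant_strict_mono hPm.le hx hy hxPm
      hyPm hxy
  rcases lt_trichotomy P Pp with h | h | h
  · simpa [hzero, profileNumer_left hPm hPp hlt.ne, profileNumer_right hPm hPp hlt.ne]
      using secant hP hPp.le hP_lt.ne hlt.ne h
  · exact h
  · simpa [hzero, profileNumer_left hPm hPp hlt.ne, profileNumer_right hPm hPp hlt.ne]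
      using secant hPp.le hP hlt.ne hP_lt.ne h

theorem profileNumer_zero_pos (hγ : 0 < γ) (hPp : 0 < Pp) (hlt : Pp < Pm) :
    0 < profileNumer γ Pm Pp 0 := by
  have hPm := hPp.trans hlt
  have quotient_pos : 0 < (Pm ^ γ - Pp ^ γ) / (Pm - Pp) :=
    div_pos (sub_pos.2 (Real.rpow_lt_rpow hPp.le hlt hγ)) (sub_pos.2 hlt)
  rw [profileNumer, Real.zero_rpow (by linarith), ← neg_sub Pm Pp, ← neg_sub (Pm ^ γ),
    neg_div_neg_eq, zero_add, mul_zero, sub_zero]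
  exact mul_pos (mul_pos hPm hPp) quotient_pos

theorem continuous_profileNumer (hγ : 0 < γ) : Continuous (profileNumer γ Pm Pp) :=
  (Real.continuous_rpow_const (by linarith)).add (by fun_prop)

theorem exists_hasDerivAt_profileNumer_pos (hγ : 0 < γ) (hPp : 0 < Pp) (hlt : Pp < Pm) :
    ∃ d > 0, HasDerivAt (profileNumer γ Pm Pp) d Pm := by
  have hPm := hPp.trans hlt
  have hdiff : DifferentiableAt ℝ (profileNumer γ Pm Pp) Pm :=
    (Real.differentiableAt_rpow_const_of_ne _ hPm.ne').add (by fun_prop)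
  refine ⟨_, ?_, hdiff.hasDerivAt⟩
  have slope_lt := (strictConvexOn_profileNumer (Pm := Pm) (Pp := Pp) hγ).slope_lt_deriv hPp.le
    hPm.le hlt hdiff
  rwa [slope_def_field, profileNumer_left hPm hPp hlt.ne, profileNumer_right hPm hPp hlt.ne,
    sub_zero, zero_div] at slope_lt

/-- The force `g` in `v'' = g v - c * v'`, the form the profile system takes in the logarithmic
density `v = log P`. -/
noncomputable def logForce (γ k Pm Pp v : ℝ) : ℝ :=
  2 / k ^ 2 * profileF γ Pm Pp (Real.exp v) / Real.exp v

theorem logForce_eq (γ k Pm Pp v : ℝ) :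
    logForce γ k Pm Pp v =
      2 / k ^ 2 * (profileNumer γ Pm Pp (Real.exp v) / Real.exp v ^ 2) := by
  rw [logForce, profileF_eq_profileNumer_div (Real.exp_pos v)]
  field_simp

theorem contDiff_logForce : ContDiff ℝ 1 (logForce γ k Pm Pp) := by
  have hpow : ContDiff ℝ 1 fun v ↦ Real.exp v ^ γ :=
    Real.contDiff_exp.rpow_const_of_ne fun v ↦ (Real.exp_pos v).ne'
  have hprofile : ContDiff ℝ 1 fun v ↦ profileF γ Pm Pp (Real.exp v) :=
    (hpow.add ((contDiff_const.div Real.contDiff_exp fun v ↦ (Real.exp_pos v).ne').mul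
      contDiff_const)).sub contDiff_const
  exact (contDiff_const.mul hprofile).div Real.contDiff_exp fun v ↦ (Real.exp_pos v).ne'

theorem tendsto_logForce_atBot (hγ : 0 < γ) (hk : k ≠ 0) (hPp : 0 < Pp) (hlt : Pp < Pm) :
    Tendsto (logForce γ k Pm Pp) atBot atTop := by
  simp only [funext (logForce_eq γ k Pm Pp), div_eq_mul_inv, ← inv_pow]
  have numer_lim := ((continuous_profileNumer (Pm := Pm) (Pp := Pp) hγ).tendsto 0).comp
    Real.tendsto_exp_atBot
  have inv_exp_lim : Tendsto (fun v ↦ (Real.exp v)⁻¹) atBot atTop :=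
    tendsto_inv_nhdsGT_zero.comp Real.tendsto_exp_atBot_nhdsGT
  exact (numer_lim.pos_mul_atTop (profileNumer_zero_pos hγ hPp hlt)
    ((tendsto_pow_atTop two_ne_zero).comp inv_exp_lim)).const_mul_atTop (by positivity)

theorem logForce_log_left (hPm : 0 < Pm) (hPp : 0 < Pp) (hne : Pp ≠ Pm) :
    logForce γ k Pm Pp (Real.log Pm) = 0 := by
  rw [logForce_eq, Real.exp_log hPm, profileNumer_left hPm hPp hne, zero_div, mul_zero]

theorem eq_log_of_logForce_eq_zero (hγ : 0 < γ) (hk : k ≠ 0) (hPp : 0 < Pp) (hlt : Pp < Pm) {v : ℝ}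
    (hv : v < Real.log Pm) (hzero : logForce γ k Pm Pp v = 0) : v = Real.log Pp := by
  have numer_zero : profileNumer γ Pm Pp (Real.exp v) = 0 := by
    simpa [logForce_eq, hk] using hzero
  rw [← eq_of_profileNumer_eq_zero hγ hPp hlt (Real.exp_pos v).le
    ((Real.lt_log_iff_exp_lt (hPp.trans hlt)).1 hv) numer_zero, Real.log_exp]

theorem exists_hasDerivAt_logForce_pos (hγ : 0 < γ) (hk : k ≠ 0) (hPp : 0 < Pp) (hlt : Pp < Pm) :
    ∃ d > 0, HasDerivAt (logForce γ k Pm Pp) d (Real.log Pm) := by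
  have hPm := hPp.trans hlt
  obtain ⟨d, hd, hderiv⟩ := exists_hasDerivAt_profileNumer_pos hγ hPp hlt
  rw [← Real.exp_log hPm] at hderiv
  have numer_comp :
      HasDerivAt (fun v ↦ profileNumer γ Pm Pp (Real.exp v)) (d * Pm) (Real.log Pm) := by
    have := hderiv.comp (Real.log Pm) (Real.hasDerivAt_exp _)
    rwa [Real.exp_log hPm] at this
  have hforce := (numer_comp.fun_div ((Real.hasDerivAt_exp (Real.log Pm)).fun_pow 2)
    (pow_ne_zero 2 (Real.exp_pos _).ne')).const_mul (2 / k ^ 2)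
  rw [← funext (logForce_eq γ k Pm Pp)] at hforce
  refine ⟨2 / k ^ 2 * (d / Pm), by positivity, hforce.congr_deriv ?_⟩
  rw [Real.exp_log hPm, profileNumer_left hPm hPp hlt.ne]
  field_simp
  ring

end ProfileForce

section TravelingProfile

/-- `(P, Q)` is a traveling wave profile of the viscous QHD system with viscosity `μ`,
dispersion `k` and speed `s`: a global solution of the profile system with positive density that
connects `(Pm, 0)` at `-∞` to `(Pp, 0)` at `+∞`. -/
structure IsTravelingProfile (γ μ k s Pm Pp : ℝ) (P Q : ℝ → ℝ) : Prop where
  pos : ∀ y, 0 < P y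
  hasDerivAt_density : ∀ y, HasDerivAt P (Q y) y
  hasDerivAt_slope : ∀ y, HasDerivAt Q
    (2 / k ^ 2 * profileF γ Pm Pp (P y) - 2 * μ * s / k ^ 2 * Q y + (Q y) ^ 2 / P y) y
  tendsto_atBot : Tendsto (fun y ↦ (P y, Q y)) atBot (𝓝 (Pm, 0))
  tendsto_atTop : Tendsto (fun y ↦ (P y, Q y)) atTop (𝓝 (Pp, 0))

variable {γ μ k s Pm Pp : ℝ}

theorem isTravelingProfile_exp (hPm : 0 < Pm) (hPp : 0 < Pp) {z : ℝ → ℝ × ℝ}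
    (hz : IsIntegralCurve z fun _ ↦ dampedField (logForce γ k Pm Pp) (2 * μ * s / k ^ 2))
    (hbot : Tendsto z atBot (𝓝 (Real.log Pm, 0))) (htop : Tendsto z atTop (𝓝 (Real.log Pp, 0))) :
    IsTravelingProfile γ μ k s Pm Pp (fun y ↦ Real.exp (z y).1)
      fun y ↦ Real.exp (z y).1 * (z y).2 := by
  have velocity (y : ℝ) : HasDerivAt (fun y ↦ (z y).1) (z y).2 y := (hz y).fst
  have acceleration (y : ℝ) : HasDerivAt (fun y ↦ (z y).2)
      (logForce γ k Pm Pp (z y).1 - 2 * μ * s / k ^ 2 * (z y).2) y := (hz y).snd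
  have lim {l : Filter ℝ} {P : ℝ} (hP : 0 < P) (hl : Tendsto z l (𝓝 (Real.log P, 0))) :
      Tendsto (fun y ↦ (Real.exp (z y).1, Real.exp (z y).1 * (z y).2)) l (𝓝 (P, 0)) := by
    have hcont : Continuous fun z : ℝ × ℝ ↦ (Real.exp z.1, Real.exp z.1 * z.2) := by fun_prop
    exact (hcont.tendsto' _ _ (by simp [Real.exp_log hP])).comp hl
  refine ⟨fun y ↦ Real.exp_pos _, fun y ↦ (velocity y).exp, fun y ↦ ?_, lim hPm hbot, lim hPp htop⟩
  refine ((velocity y).exp.mul (acceleration y)).congr_deriv ?_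
  rw [logForce]
  field_simp
  ring

theorem IsTravelingProfile.reflect {P Q : ℝ → ℝ} (h : IsTravelingProfile γ μ k s Pm Pp P Q) :
    IsTravelingProfile γ μ k (-s) Pp Pm (fun y ↦ P (-y)) fun y ↦ -Q (-y) where
  pos y := h.pos (-y)
  hasDerivAt_density y :=
    ((h.hasDerivAt_density (-y)).comp y (hasDerivAt_neg y)).congr_deriv (mul_neg_one _)
  hasDerivAt_slope y := by
    refine (((h.hasDerivAt_slope (-y)).comp y (hasDerivAt_neg y)).fun_neg).congr_deriv ?_
    rw [profileF_symm γ Pp Pm]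
    ring
  tendsto_atBot := by
    simpa using (h.tendsto_atTop.comp tendsto_neg_atBot_atTop).fst_nhds.prodMk_nhds
      (h.tendsto_atTop.comp tendsto_neg_atBot_atTop).snd_nhds.neg
  tendsto_atTop := by
    simpa using (h.tendsto_atBot.comp tendsto_neg_atTop_atBot).fst_nhds.prodMk_nhds
      (h.tendsto_atBot.comp tendsto_neg_atTop_atBot).snd_nhds.neg

theorem exists_isTravelingProfile_of_lt (hγ : 0 < γ) (hμ : 0 < μ) (hk : k ≠ 0) (hs : 0 < s)
    (hPp : 0 < Pp) (hlt : Pp < Pm) : ∃ P Q, IsTravelingProfile γ μ k s Pm Pp P Q := by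
  have hPm := hPp.trans hlt
  obtain ⟨d, hd, hderiv⟩ := exists_hasDerivAt_logForce_pos hγ hk hPp hlt
  obtain ⟨v, hv, hlt_v⟩ := (((tendsto_intervalIntegral_atBot_atTop contDiff_logForce.continuous
    (tendsto_logForce_atBot hγ hk hPp hlt) (Real.log Pm)).eventually_ge_atTop 0).and
    (eventually_lt_atBot (Real.log Pm))).exists
  obtain ⟨K, hK⟩ := contDiff_logForce (γ := γ) (k := k) (Pm := Pm) (Pp := Pp)
    |>.contDiffOn.exists_lipschitzOnWith one_ne_zero (convex_Icc v (Real.log Pm)) isCompact_Icc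
  obtain ⟨z, hz, hbot, htop⟩ := exists_heteroclinic hK hlt_v
    (show 0 < 2 * μ * s / k ^ 2 by positivity) (logForce_log_left hPm hPp hlt.ne)
    hderiv.hasDerivWithinAt hd hv fun x hx ↦ eq_log_of_logForce_eq_zero hγ hk hPp hlt hx.2
  exact ⟨_, _, isTravelingProfile_exp hPm hPp hz hbot htop⟩

theorem exists_isTravelingProfile (hγ : 0 < γ) (hμ : 0 < μ) (hk : k ≠ 0) (hPm : 0 < Pm)
    (hPp : 0 < Pp) (hs : 0 < s * (Pm - Pp)) : ∃ P Q, IsTravelingProfile γ μ k s Pm Pp P Q := by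
  rcases pos_and_pos_or_neg_and_neg_of_mul_pos hs with ⟨hs, hlt⟩ | ⟨hs, hlt⟩
  · exact exists_isTravelingProfile_of_lt hγ hμ hk hs hPp (sub_pos.1 hlt)
  · obtain ⟨P, Q, h⟩ := exists_isTravelingProfile_of_lt hγ hμ hk (neg_pos.2 hs) hPm (sub_neg.1 hlt)
    exact ⟨_, _, neg_neg s ▸ h.reflect⟩

end TravelingProfile

section LaxCondition

variable {γ s Pm Pp Jm Jp : ℝ}

theorem strictMonoOn_soundSpeed_mul_self (hγ : 0 < γ) :
    StrictMonoOn (fun ρ ↦ soundSpeed γ ρ * ρ) (Ioi 0) := by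
  have eqOn : EqOn (fun ρ ↦ √(γ * ρ ^ (γ + 1))) (fun ρ ↦ soundSpeed γ ρ * ρ) (Ioi 0) := by
    intro ρ (hρ : 0 < ρ)
    have hpow : γ * ρ ^ (γ + 1) = γ * ρ ^ (γ - 1) * ρ ^ 2 := by
      rw [mul_assoc, ← Real.rpow_add_natCast hρ.ne', Nat.cast_two, show γ - 1 + 2 = γ + 1 by ring]
    change √_ = √_ * ρ
    rw [hpow, Real.sqrt_mul (by positivity), Real.sqrt_sq hρ.le]
  refine StrictMonoOn.congr (fun x (hx : 0 < x) y _ hxy ↦ ?_) eqOn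
  exact Real.sqrt_lt_sqrt (by positivity) (mul_lt_mul_of_pos_left
    (Real.rpow_lt_rpow hx.le hxy (by linarith)) hγ)

theorem mul_lt_mul_of_rankineHugoniot (hPm : 0 < Pm) (hPp : 0 < Pp) (hRH : Jp - Jm = s * (Pp - Pm))
    {σm σp : ℝ} (hp : Jp / Pp + σp < s) (hm : s < Jm / Pm + σm) : σp * Pp < σm * Pm := by
  have hp' : Jp + σp * Pp < s * Pp := by
    simpa [add_mul, hPp.ne'] using mul_lt_mul_of_pos_right hp hPp
  have hm' : s * Pm < Jm + σm * Pm := by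
    simpa [add_mul, hPm.ne'] using mul_lt_mul_of_pos_right hm hPm
  linarith

theorem lt_of_lax_two_shock (hγ : 0 < γ) (hPm : 0 < Pm) (hPp : 0 < Pp)
    (hRH : Jp - Jm = s * (Pp - Pm)) (hp : Jp / Pp + soundSpeed γ Pp < s)
    (hm : s < Jm / Pm + soundSpeed γ Pm) : Pp < Pm :=
  ((strictMonoOn_soundSpeed_mul_self hγ).lt_iff_lt hPp hPm).1
    (mul_lt_mul_of_rankineHugoniot hPm hPp hRH hp hm)

theorem lt_of_lax_one_shock (hγ : 0 < γ) (hPm : 0 < Pm) (hPp : 0 < Pp)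
    (hRH : Jp - Jm = s * (Pp - Pm)) (hp : Jp / Pp - soundSpeed γ Pp < s)
    (hm : s < Jm / Pm - soundSpeed γ Pm) : Pm < Pp := by
  refine ((strictMonoOn_soundSpeed_mul_self hγ).lt_iff_lt hPm hPp).1 (neg_lt_neg_iff.1 ?_)
  simpa only [neg_mul] using mul_lt_mul_of_rankineHugoniot hPm hPp hRH hp hm

end LaxCondition

theorem stmt_4_general {γ μ k s Pm Pp Jm Jp : ℝ} (hγ : 0 < γ) (hμ : 0 < μ) (hk : k ≠ 0)
    (hPm : 0 < Pm) (hPp : 0 < Pp) (hRH : Jp - Jm = s * (Pp - Pm))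
    (hLax : (Jp / Pp + soundSpeed γ Pp < s ∧ s < Jm / Pm + soundSpeed γ Pm ∧ 0 < s) ∨
      (Jp / Pp - soundSpeed γ Pp < s ∧ s < Jm / Pm - soundSpeed γ Pm ∧ s < 0)) :
    ∃ P Q J : ℝ → ℝ, (∀ y : ℝ, 0 < P y) ∧ (∀ y : ℝ, HasDerivAt P (Q y) y) ∧
      (∀ y : ℝ, HasDerivAt Q
        (2 / k ^ 2 * profileF γ Pm Pp (P y) - 2 * μ * s / k ^ 2 * Q y + (Q y) ^ 2 / P y) y) ∧
      Tendsto (fun y => (P y, Q y)) atBot (𝓝 (Pm, 0)) ∧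
      Tendsto (fun y => (P y, Q y)) atTop (𝓝 (Pp, 0)) ∧
      (∀ y : ℝ, J y = s * P y - (s * Pm - Jm)) := by
  have speed_mul_jump_pos : 0 < s * (Pm - Pp) := by
    rcases hLax with ⟨hp, hm, hs⟩ | ⟨hp, hm, hs⟩
    · exact mul_pos hs (sub_pos.2 (lt_of_lax_two_shock hγ hPm hPp hRH hp hm))
    · exact mul_pos_of_neg_of_neg hs (sub_neg.2 (lt_of_lax_one_shock hγ hPm hPp hRH hp hm))
  obtain ⟨P, Q, h⟩ := exists_isTravelingProfile hγ hμ hk hPm hPp speed_mul_jump_pos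
  exact ⟨P, Q, fun y ↦ s * P y - (s * Pm - Jm), h.pos, h.hasDerivAt_density, h.hasDerivAt_slope,
    h.tendsto_atBot, h.tendsto_atTop, fun _ ↦ rfl⟩

/-- small-amplitude existence of traveling wave profiles under the
Rankine–Hugoniot and Lax shock conditions: for a Lax 2-shock with supersonic right state
(`u⁺ > c_s(P⁺)`) or a Lax 1-shock with subsonic left state, with `|P⁺ − P⁻| < ε`, there is a
traveling wave profile `(P,Q)` connecting `(P⁻,0)` to `(P⁺,0)`, with momentum profile
`J(y) = sP(y) − (sP⁻ − J⁻)`. -/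
theorem stmt_4 (γ μ k Pm : ℝ) (hγ : 1 ≤ γ) (hμ : 0 < μ) (hk : 0 < k) (hPm : 0 < Pm) :
    ∃ ε > 0, ∀ s Pp Jp Jm : ℝ, 0 < Pp → |Pp - Pm| < ε →
      Jp - Jm = s * (Pp - Pm) →
      (Jp ^ 2 / Pp + Pp ^ γ) - (Jm ^ 2 / Pm + Pm ^ γ) = s * (Jp - Jm) →
      ((Jp / Pp + soundSpeed γ Pp < s ∧ s < Jm / Pm + soundSpeed γ Pm ∧
          soundSpeed γ Pp < Jp / Pp) ∨
       (Jp / Pp - soundSpeed γ Pp < s ∧ s < Jm / Pm - soundSpeed γ Pm ∧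
          |Jm / Pm| < soundSpeed γ Pm)) →
      ∃ P Q J : ℝ → ℝ,
        (∀ y : ℝ, 0 < P y) ∧
        (∀ y : ℝ, HasDerivAt P (Q y) y) ∧
        (∀ y : ℝ, HasDerivAt Q
          (2 / k ^ 2 * profileF γ Pm Pp (P y) - 2 * μ * s / k ^ 2 * Q y + (Q y) ^ 2 / P y) y) ∧
        Tendsto (fun y => (P y, Q y)) atBot (𝓝 (Pm, 0)) ∧
        Tendsto (fun y => (P y, Q y)) atTop (𝓝 (Pp, 0)) ∧
        (∀ y : ℝ, J y = s * P y - (s * Pm - Jm)) := by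
  refine ⟨1, one_pos, fun s Pp Jp Jm hPp _ hRH _ hLax ↦
    stmt_4_general (zero_lt_one.trans_le hγ) hμ hk.ne' hPm hPp hRH (hLax.imp ?_ ?_)⟩
  · have speed_nonneg : 0 ≤ soundSpeed γ Pp := Real.sqrt_nonneg _
    exact fun ⟨hp, hm, supersonic⟩ ↦ ⟨hp, hm, by linarith only [hp, supersonic, speed_nonneg]⟩
  · exact fun ⟨hp, hm, subsonic⟩ ↦ ⟨hp, hm, by linarith only [hm, (abs_lt.1 subsonic).2]⟩
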